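/- Let {π_α : α ∈ A} be a family of Borel maps from Ω ⊂ ℝⁿ to a metric measure space (X, h) with h(B(x,δ)) ≳ δ^m, indexed by a probability space (A, ψ), such that (p, α) ↦ π_α(p) is continuous, and suppose the family is m-transversal: ψ{α : dist(π_α x, π_α y) ≤ δ|x-y|} ≤ c δ^m for all distinct x,y ∈ Ω and δ ≤ δ₀. If E ⊂ Ω is a Borel set supporting a probability measure μ with finite τ-energy I_τ(μ) < ∞ for some τ < m, then for ψ-almost every α, the pushforward (π_α)_♯μ has finite τ-energy; consequently the Hausdorff dimension of π_α(E) is at least τ for ψ-a.e. α. -/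

import Mathlib

open MeasureTheory Metric Set ENNReal

/-- The `τ`-energy of a measure. -/
noncomputable def sEnergy {X : Type*} [EMetricSpace X] [MeasurableSpace X]
    (s : ℝ) (μ : Measure X) : ℝ≥0∞ :=
  ∫⁻ x, ∫⁻ y, (edist x y) ^ (-s) ∂μ ∂μ

/-- Tonelli-type inequality with no measurability in the parameter. -/
lemma upper_tonelli {ι Z : Type*} [MeasurableSpace ι] (ψ : Measure ι)
    [MetricSpace Z] [SecondCountableTopology Z] [MeasurableSpace Z] [BorelSpace Z]
    (ρ : Measure Z) [IsProbabilityMeasure ρ] (S : Set Z) (z₀ : Z) (hz₀ : z₀ ∈ S)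
    (hS : ∀ᵐ z ∂ρ, z ∈ S) (F : ι → Z → ℝ≥0∞) (hF : ∀ α, Continuous (F α))
    (H : Z → ℝ≥0∞) (hH : Continuous H) (k : ℝ≥0∞) (hk : k ≠ ⊤) (hHk : ∀ z, H z ≤ k)
    (hg : ∀ z ∈ S, ∃ g : ι → ℝ≥0∞, Measurable g ∧ (∀ α, F α z ≤ g α) ∧ ∫⁻ α, g α ∂ψ ≤ H z) :
    ∃ J : ι → ℝ≥0∞, Measurable J ∧ (∀ α, ∫⁻ z, F α z ∂ρ ≤ J α) ∧
      ∫⁻ α, J α ∂ψ ≤ ∫⁻ z, H z ∂ρ := by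
  classical
  have hg' : ∀ z, ∃ g : ι → ℝ≥0∞, z ∈ S →
      (Measurable g ∧ (∀ α, F α z ≤ g α) ∧ ∫⁻ α, g α ∂ψ ≤ H z) := by
    intro z
    by_cases hz : z ∈ S
    · obtain ⟨g, h⟩ := hg z hz
      exact ⟨g, fun _ => h⟩
    · exact ⟨0, fun h => absurd h hz⟩
  choose g hg using hg'
  let P : ℕ → SimpleFunc Z Z := fun j => SimpleFunc.approxOn id measurable_id S z₀ hz₀ j
  have hPS : ∀ j z, P j z ∈ S := fun j z => SimpleFunc.approxOn_mem measurable_id hz₀ j z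
  have hPr : ∀ j, ∀ w ∈ (P j).range, w ∈ S := by
    intro j w hw
    obtain ⟨z, rfl⟩ := SimpleFunc.mem_range.1 hw
    exact hPS j z
  have hPt : ∀ z ∈ S, Filter.Tendsto (fun j => P j z) Filter.atTop (nhds z) := by
    intro z hz
    exact SimpleFunc.tendsto_approxOn measurable_id hz₀ (subset_closure hz)
  have hsum : ∀ (f : Z → ℝ≥0∞) j, ∫⁻ z, f (P j z) ∂ρ
      = ∑ w ∈ (P j).range, f w * ρ ((P j) ⁻¹' {w}) := by
    intro f j
    rw [← SimpleFunc.map_lintegral, ← SimpleFunc.lintegral_eq_lintegral]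
    rfl
  let Jj : ℕ → ι → ℝ≥0∞ := fun j α => ∑ w ∈ (P j).range, g w α * ρ ((P j) ⁻¹' {w})
  have hJm : ∀ j, Measurable (Jj j) := by
    intro j
    refine Finset.measurable_fun_sum _ fun w hw => ?_
    exact ((hg w (hPr j w hw)).1).mul_const _
  refine ⟨fun α => Filter.liminf (fun j => Jj j α) Filter.atTop, .liminf hJm, ?_, ?_⟩
  · intro α
    calc ∫⁻ z, F α z ∂ρ = ∫⁻ z, Filter.liminf (fun j => F α (P j z)) Filter.atTop ∂ρ := by
          refine lintegral_congr_ae ?_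
          filter_upwards [hS] with z hz
          exact (((hF α).tendsto z).comp (hPt z hz)).liminf_eq.symm
      _ ≤ Filter.liminf (fun j => ∫⁻ z, F α (P j z) ∂ρ) Filter.atTop :=
          lintegral_liminf_le fun j => (hF α).measurable.comp (P j).measurable
      _ ≤ _ := by
          refine Filter.liminf_le_liminf (Filter.Eventually.of_forall fun j => ?_)
          simp only [hsum, Jj]
          refine Finset.sum_le_sum fun w hw => ?_
          gcongr
          exact (hg w (hPr j w hw)).2.1 α
  · have hlim : Filter.Tendsto (fun j => ∫⁻ z, H (P j z) ∂ρ) Filter.atTop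
        (nhds (∫⁻ z, H z ∂ρ)) := by
      refine tendsto_lintegral_of_dominated_convergence (fun _ => k)
        (fun j => hH.measurable.comp (P j).measurable)
        (fun j => Filter.Eventually.of_forall fun z => hHk _) (by simpa using hk) ?_
      filter_upwards [hS] with z hz
      exact (hH.tendsto z).comp (hPt z hz)
    calc _ ≤ Filter.liminf (fun j => ∫⁻ α, Jj j α ∂ψ) Filter.atTop := lintegral_liminf_le hJm
      _ ≤ Filter.liminf (fun j => ∫⁻ z, H (P j z) ∂ρ) Filter.atTop := by
          refine Filter.liminf_le_liminf (Filter.Eventually.of_forall fun j => ?_)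
          simp only [hsum, Jj]
          rw [lintegral_finsetSum' _
            (fun w hw => (((hg w (hPr j w hw)).1).mul_const _).aemeasurable)]
          refine Finset.sum_le_sum fun w hw => ?_
          rw [lintegral_mul_const _ (hg w (hPr j w hw)).1]
          gcongr
          exact (hg w (hPr j w hw)).2.2
      _ = _ := hlim.liminf_eq

/-- the constant in the transversality estimate -/
lemma const_ne_top (m c δ₀ τ : ℝ) (hc : 0 < c) (hδ₀ : 0 < δ₀) (hτm : τ < m) :
    (ENNReal.ofReal δ₀ ^ (-τ) * (1 + ∑' j : ℕ, (2 : ℝ≥0∞) ^ (((j : ℝ) + 1) * τ) *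
      ENNReal.ofReal (c * ((1 / 2) ^ j * δ₀) ^ m))) ≠ ⊤ := by
  refine ENNReal.mul_ne_top (ENNReal.rpow_ne_top_of_ne_zero (by simpa using hδ₀) (by simp)) ?_
  refine ENNReal.add_ne_top.2 ⟨by simp, ?_⟩
  have : ∀ j : ℕ, (2 : ℝ≥0∞) ^ (((j : ℝ) + 1) * τ) * ENNReal.ofReal (c * ((1 / 2) ^ j * δ₀) ^ m)
      = ENNReal.ofReal (c * δ₀ ^ m * 2 ^ τ * (2 ^ (τ - m)) ^ j) := by
    intro j
    have h2 : (2 : ℝ≥0∞) = ENNReal.ofReal 2 := by simp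
    rw [h2, ENNReal.ofReal_rpow_of_pos (by norm_num), ← ENNReal.ofReal_mul (by positivity)]
    congr 1
    rw [Real.mul_rpow (by positivity) hδ₀.le, ← Real.rpow_natCast, ← Real.rpow_natCast,
      one_div, Real.inv_rpow (by norm_num), ← Real.rpow_neg (by norm_num),
      ← Real.rpow_mul (by norm_num), ← Real.rpow_mul (by norm_num),
      show ((j : ℝ) + 1) * τ = τ + j * τ by ring, Real.rpow_add (by norm_num),
      show (τ - m) * (j : ℝ) = j * τ + -(j : ℝ) * m by ring, Real.rpow_add (by norm_num)]
    ring
  simp_rw [this]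
  refine Summable.tsum_ofReal_ne_top ?_
  refine (summable_geometric_of_lt_one (by positivity) ?_).mul_left _
  exact Real.rpow_lt_one_of_one_lt_of_neg (by norm_num) (by linarith)

lemma pair_bound {ι : Type*} [MeasurableSpace ι] (ψ : Measure ι) [IsProbabilityMeasure ψ]
    (m c δ₀ τ r : ℝ) (hδ₀ : 0 < δ₀) (hτ : 0 < τ) (hr : 0 < r)
    (D : ι → ℝ) (hD : ∀ α, 0 ≤ D α)
    (ht : ∀ δ : ℝ, 0 < δ → δ ≤ δ₀ → ψ {α | D α ≤ δ * r} ≤ ENNReal.ofReal (c * δ ^ m)) :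
    ∃ g : ι → ℝ≥0∞, Measurable g ∧ (∀ α, ENNReal.ofReal (D α) ^ (-τ) ≤ g α) ∧
      ∫⁻ α, g α ∂ψ ≤ (ENNReal.ofReal δ₀ ^ (-τ) * (1 + ∑' j : ℕ, (2 : ℝ≥0∞) ^ (((j : ℝ) + 1) * τ) *
      ENNReal.ofReal (c * ((1 / 2) ^ j * δ₀) ^ m))) * ENNReal.ofReal r ^ (-τ) := by
  let S : ℕ → Set ι := fun j => toMeasurable ψ {α | D α ≤ (1 / 2) ^ j * δ₀ * r}
  have hSm : ∀ j, MeasurableSet (S j) := fun j => measurableSet_toMeasurable _ _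
  have hSψ : ∀ j, ψ (S j) ≤ ENNReal.ofReal (c * ((1 / 2) ^ j * δ₀) ^ m) := by
    intro j
    simp only [S, measure_toMeasurable]
    refine ht _ (by positivity) ?_
    exact mul_le_of_le_one_left hδ₀.le (pow_le_one₀ (by norm_num) (by norm_num))
  have hSs : ∀ j α, D α ≤ (1 / 2) ^ j * δ₀ * r → α ∈ S j := fun j α h =>
    subset_toMeasurable ψ {α | D α ≤ (1 / 2) ^ j * δ₀ * r} h
  let t : ℕ → ι → ℝ≥0∞ := fun j =>
    (S j).indicator (fun _ => (2 : ℝ≥0∞) ^ (((j : ℝ) + 1) * τ))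
  have htm : ∀ j, Measurable (t j) := fun j => measurable_const.indicator (hSm j)
  have hA : ENNReal.ofReal (δ₀ * r) ^ (-τ) = ENNReal.ofReal δ₀ ^ (-τ) * ENNReal.ofReal r ^ (-τ) := by
    rw [ENNReal.ofReal_mul hδ₀.le, ENNReal.mul_rpow_of_ne_top (by simp) (by simp)]
  refine ⟨fun α => ENNReal.ofReal (δ₀ * r) ^ (-τ) * (1 + ∑' j, t j α), ?_, ?_, ?_⟩
  · exact (measurable_const.add (Measurable.tsum htm)).const_mul _
  · intro α
    have hδr : 0 < δ₀ * r := by positivity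
    rcases lt_or_ge (δ₀ * r) (D α) with h | h
    · calc ENNReal.ofReal (D α) ^ (-τ) ≤ ENNReal.ofReal (δ₀ * r) ^ (-τ) := by
            rw [ENNReal.rpow_neg, ENNReal.rpow_neg]
            gcongr
        _ ≤ _ := le_mul_of_one_le_right' le_self_add
    rcases (hD α).eq_or_lt with h0 | h0
    · have : ∑' j, t j α = ⊤ := by
        refine top_le_iff.1 ?_
        rw [← ENNReal.tsum_const_eq_top_of_ne_zero (α := ℕ) (c := 1) one_ne_zero]
        refine ENNReal.tsum_le_tsum fun j => ?_
        simp only [t]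
        rw [indicator_of_mem (hSs j α (by rw [← h0]; positivity))]
        exact ENNReal.one_le_rpow (by norm_num) (by positivity)
      beta_reduce
      rw [this, add_top, ENNReal.mul_top]
      · exact le_top
      · simp [ENNReal.rpow_eq_zero_iff, hτ.le]
    · obtain ⟨j, hj1, hj2⟩ := exists_nat_pow_near_of_lt_one (x := D α / (δ₀ * r)) (y := 1 / 2)
        (by positivity) ((div_le_one hδr).2 h) (by norm_num) (by norm_num)
      rw [lt_div_iff₀ hδr] at hj1
      rw [div_le_iff₀ hδr, ← mul_assoc] at hj2
      calc ENNReal.ofReal (D α) ^ (-τ)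
          ≤ ENNReal.ofReal ((1 / 2) ^ (j + 1) * (δ₀ * r)) ^ (-τ) := by
            rw [ENNReal.rpow_neg, ENNReal.rpow_neg]
            gcongr
        _ = ENNReal.ofReal (δ₀ * r) ^ (-τ) * (2 : ℝ≥0∞) ^ (((j : ℝ) + 1) * τ) := by
            have h2 : (2 : ℝ≥0∞) = ENNReal.ofReal 2 := by simp
            rw [h2, ENNReal.ofReal_rpow_of_pos (by positivity), ENNReal.ofReal_rpow_of_pos hδr,
              ENNReal.ofReal_rpow_of_pos (by norm_num), ← ENNReal.ofReal_mul (by positivity)]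
            congr 1
            rw [Real.mul_rpow (by positivity) hδr.le, mul_comm]
            congr 1
            rw [← Real.rpow_natCast, one_div, Real.inv_rpow (by norm_num),
              ← Real.rpow_neg (by norm_num), ← Real.rpow_mul (by norm_num)]
            push_cast
            congr 1
            ring
        _ = ENNReal.ofReal (δ₀ * r) ^ (-τ) * t j α := by
            simp only [t]
            rw [indicator_of_mem (hSs j α hj2)]
        _ ≤ _ := by
            beta_reduce
            gcongr
            exact (ENNReal.le_tsum (f := fun j => t j α) j).trans le_add_self
  · have htsm : Measurable fun α => 1 + ∑' j, t j α :=
      measurable_const.add (Measurable.tsum htm)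
    beta_reduce
    rw [lintegral_const_mul _ htsm,
      lintegral_add_left measurable_const, lintegral_tsum fun j => (htm j).aemeasurable, hA,
      mul_right_comm]
    simp only [lintegral_const, measure_univ, mul_one]
    gcongr with j
    simp only [t]
    rw [lintegral_indicator_const (hSm j)]
    gcongr
    exact hSψ j

lemma dim_bound {V X : Type*} [MeasurableSpace V] [TopologicalSpace V] [OpensMeasurableSpace V]
    [SecondCountableTopology V]
    [MetricSpace X] [MeasurableSpace X] [BorelSpace X] (μ : Measure V) [IsProbabilityMeasure μ]
    (f : V → X) (hf : Continuous f) (τ : ℝ) (hτ : 0 < τ) (E : Set V)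
    (hμE : ∀ᵐ x ∂μ, x ∈ E)
    (h : ∫⁻ x, ∫⁻ y, edist (f x) (f y) ^ (-τ) ∂μ ∂μ ≠ ⊤) :
    ENNReal.ofReal τ ≤ dimH (f '' E) := by
  have hcont : Continuous fun p : V × V => edist (f p.1) (f p.2) ^ (-τ) :=
    ENNReal.continuous_rpow_const.comp
      ((hf.comp continuous_fst).edist (hf.comp continuous_snd))
  let u : V → ℝ≥0∞ := fun x => ∫⁻ y, edist (f x) (f y) ^ (-τ) ∂μ
  have hu : Measurable u := hcont.measurable.lintegral_prod_right'
  have hfin : ∀ᵐ x ∂μ, u x < ⊤ := ae_lt_top hu h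
  obtain ⟨M, hM⟩ : ∃ M : ℕ, μ {x | u x ≤ (M : ℝ≥0∞) + 1} ≠ 0 := by
    by_contra! hcon
    have h0 : ∀ᵐ x ∂μ, ∀ M : ℕ, ¬ (u x ≤ (M : ℝ≥0∞) + 1) := by
      rw [ae_all_iff]
      intro M
      rw [ae_iff]
      simpa using hcon M
    have : ∀ᵐ x ∂μ, False := by
      filter_upwards [hfin, h0] with x h1 h2
      obtain ⟨N, hN⟩ := ENNReal.exists_nat_gt h1.ne
      exact h2 N (hN.le.trans le_self_add)
    simp only [Filter.eventually_false_iff_eq_bot, ae_eq_bot] at this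
    exact IsProbabilityMeasure.ne_zero μ this
  set K : ℝ≥0∞ := (M : ℝ≥0∞) + 1 with hK
  have hK0 : K ≠ 0 := by simp [hK]
  have hKt : K ≠ ⊤ := by simp [hK]
  set B := {x | u x ≤ K} with hB
  have hBm : MeasurableSet B := hu measurableSet_Iic
  let ν : Measure X := K⁻¹ • Measure.map f (μ.restrict B)
  have hle : ν ≤ μH[τ] := by
    refine Measure.le_hausdorffMeasure τ ν 1 one_pos fun s hs => ?_
    have hcl : MeasurableSet (closure s) := isClosed_closure.measurableSet
    have hdi : ediam (closure s) = ediam s := Metric.ediam_closure s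
    calc ν s ≤ ν (closure s) := measure_mono subset_closure
      _ = K⁻¹ * μ (f ⁻¹' closure s ∩ B) := by
        simp only [ν, Measure.smul_apply, smul_eq_mul]
        rw [Measure.map_apply hf.measurable hcl, Measure.restrict_apply (hf.measurable hcl)]
      _ ≤ ediam s ^ τ := by
        rw [ENNReal.inv_mul_le_iff hK0 hKt]
        rcases (f ⁻¹' closure s ∩ B).eq_empty_or_nonempty with he | ⟨x, hx1, hx2⟩
        · simp [he]
        have h1 : ediam s ^ (-τ) * μ (f ⁻¹' closure s ∩ B) ≤ K := by
          calc _ ≤ ediam s ^ (-τ) * μ (f ⁻¹' closure s) := by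
                gcongr; exact inter_subset_left
            _ = ∫⁻ y in f ⁻¹' closure s, ediam s ^ (-τ) ∂μ := by simp
            _ ≤ ∫⁻ y in f ⁻¹' closure s, edist (f x) (f y) ^ (-τ) ∂μ := by
                refine setLIntegral_mono' (hf.measurable hcl) fun y hy => ?_
                rw [ENNReal.rpow_neg, ENNReal.rpow_neg]
                gcongr
                rw [← hdi]
                exact Metric.edist_le_ediam_of_mem hx1 hy
            _ ≤ u x := setLIntegral_le_lintegral _ _
            _ ≤ K := hx2
        have hdt : ediam s ^ τ ≠ ⊤ :=
          ENNReal.rpow_ne_top_of_nonneg hτ.le (ne_top_of_le_ne_top one_ne_top hs)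
        rw [ENNReal.rpow_neg] at h1
        rw [mul_comm K]
        by_cases hd : ediam s ^ τ = 0
        · rw [hd, ENNReal.inv_zero] at h1
          have : μ (f ⁻¹' closure s ∩ B) = 0 := by
            by_contra hne
            rw [ENNReal.top_mul hne] at h1
            exact hKt (top_le_iff.1 h1)
          simp [this]
        · rwa [ENNReal.inv_mul_le_iff hd hdt] at h1
  have hpos : μH[τ] (f '' E) ≠ 0 := by
    intro h0
    have h1 : ν (f '' E) = 0 := le_antisymm ((hle _).trans h0.le) bot_le
    simp only [ν, Measure.smul_apply, smul_eq_mul, mul_eq_zero, ENNReal.inv_eq_zero, hKt,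
      false_or] at h1
    have h2 : μ.restrict B (f ⁻¹' (f '' E)) = 0 :=
      le_antisymm ((Measure.le_map_apply hf.measurable.aemeasurable _).trans h1.le) bot_le
    have h3 : μ.restrict B E = 0 := measure_mono_null (subset_preimage_image f E) h2
    rw [Measure.restrict_apply' hBm] at h3
    apply hM
    rw [← h3]
    refine measure_congr ?_
    filter_upwards [hμE] with x hx
    exact propext ⟨fun h => ⟨hx, h⟩, fun h => h.2⟩
  have := le_dimH_of_hausdorffMeasure_ne_zero (d := τ.toNNReal) (s := f '' E)
    (by rwa [Real.coe_toNNReal _ hτ.le])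
  exact this

/-- nonlinear Marstrand-type theorem. For an `m`-transversal family
of projections, a measure of finite `τ`-energy (`τ < m`) pushes forward to a
measure of finite `τ`-energy for a.e. parameter; hence a.e. projection of `E`
has Hausdorff dimension at least `τ`. -/
theorem marstrand_transversal
    {ι X : Type*} [MeasurableSpace ι] [TopologicalSpace ι] [MetricSpace X] [MeasurableSpace X] [BorelSpace X]
    (n : ℕ) (Ω : Set (EuclideanSpace ℝ (Fin n)))
    (ψ : Measure ι) [IsProbabilityMeasure ψ]
    (π : ι → EuclideanSpace ℝ (Fin n) → X)
    (hπmeas : ∀ α, Measurable (π α))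
    (hπcont : Continuous fun q : EuclideanSpace ℝ (Fin n) × ι => π q.2 q.1)
    (m c δ₀ τ : ℝ) (hm : 0 < m) (hc : 0 < c) (hδ₀ : 0 < δ₀) (hτ : 0 < τ) (hτm : τ < m)
    (htrans : ∀ x ∈ Ω, ∀ y ∈ Ω, x ≠ y → ∀ δ : ℝ, 0 < δ → δ ≤ δ₀ →
      ψ {α | dist (π α x) (π α y) ≤ δ * dist x y} ≤ ENNReal.ofReal (c * δ ^ m))
    (E : Set (EuclideanSpace ℝ (Fin n))) (hE : MeasurableSet E) (hEΩ : E ⊆ Ω)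
    (μ : Measure (EuclideanSpace ℝ (Fin n))) [IsProbabilityMeasure μ]
    (hμE : μ E = 1) (henergy : sEnergy τ μ ≠ ⊤) :
    (∀ᵐ α ∂ψ, sEnergy τ (Measure.map (π α) μ) < ⊤) ∧
    (∀ᵐ α ∂ψ, ENNReal.ofReal τ ≤ dimH (π α '' E)) := by
  classical
  have hcα : ∀ α, Continuous (π α) := fun α =>
    hπcont.comp (continuous_id.prodMk continuous_const)
  have hcontD : ∀ α, Continuous fun p : EuclideanSpace ℝ (Fin n) × EuclideanSpace ℝ (Fin n) =>
      edist (π α p.1) (π α p.2) ^ (-τ) := fun α =>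
    ENNReal.continuous_rpow_const.comp
      (((hcα α).comp continuous_fst).edist ((hcα α).comp continuous_snd))
  have hcont0 : Continuous fun p : EuclideanSpace ℝ (Fin n) × EuclideanSpace ℝ (Fin n) =>
      edist p.1 p.2 ^ (-τ) :=
    ENNReal.continuous_rpow_const.comp (continuous_fst.edist continuous_snd)
  have hEae : ∀ᵐ x ∂μ, x ∈ E := (mem_ae_iff_prob_eq_one hE).2 hμE
  obtain ⟨e₀, he₀⟩ : E.Nonempty := by
    rw [nonempty_iff_ne_empty]
    rintro rfl
    simp at hμE
  have hprodE : ∀ᵐ p ∂(μ.prod μ), p ∈ E ×ˢ E := by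
    have h1 : ∀ᵐ p ∂(μ.prod μ), p.1 ∈ E := Measure.quasiMeasurePreserving_fst.ae hEae
    have h2 : ∀ᵐ p ∂(μ.prod μ), p.2 ∈ E := Measure.quasiMeasurePreserving_snd.ae hEae
    filter_upwards [h1, h2] with p a b using ⟨a, b⟩
  set C : ℝ≥0∞ := (ENNReal.ofReal δ₀ ^ (-τ) * (1 + ∑' j : ℕ, (2 : ℝ≥0∞) ^ (((j : ℝ) + 1) * τ) *
      ENNReal.ofReal (c * ((1 / 2) ^ j * δ₀) ^ m))) with hC
  have hCt : C ≠ ⊤ := const_ne_top m c δ₀ τ hc hδ₀ hτm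
  have hC0 : C ≠ 0 := by
    rw [hC]
    refine mul_ne_zero ?_ (by simp)
    simp [ENNReal.rpow_eq_zero_iff, hτ.le]
  have key : ∀ k : ℕ, ∃ J : ι → ℝ≥0∞, Measurable J ∧
      (∀ α, ∫⁻ p, min (k : ℝ≥0∞) (edist (π α p.1) (π α p.2) ^ (-τ)) ∂(μ.prod μ) ≤ J α) ∧
      ∫⁻ α, J α ∂ψ ≤ ∫⁻ p, min (k : ℝ≥0∞) (C * edist p.1 p.2 ^ (-τ)) ∂(μ.prod μ) := by
    intro k
    refine upper_tonelli ψ (μ.prod μ) (E ×ˢ E) (e₀, e₀) ⟨he₀, he₀⟩ hprodE _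
      (fun α => continuous_const.min (hcontD α)) _
      (continuous_const.min ((ENNReal.continuous_const_mul hCt).comp hcont0)) (k : ℝ≥0∞)
      (by simp) (fun z => min_le_left _ _) ?_
    rintro ⟨x, y⟩ ⟨hx, hy⟩
    simp only at hx hy ⊢
    by_cases hxy : x = y
    · refine ⟨fun _ => k, measurable_const, fun α => min_le_left _ _, ?_⟩
      subst hxy
      simp [ENNReal.zero_rpow_of_neg (neg_lt_zero.2 hτ), ENNReal.mul_top hC0]
    · obtain ⟨g, hgm, hgle, hgi⟩ := pair_bound ψ m c δ₀ τ (dist x y) hδ₀ hτ (dist_pos.2 hxy)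
        (fun α => dist (π α x) (π α y)) (fun _ => dist_nonneg)
        (htrans x (hEΩ hx) y (hEΩ hy) hxy)
      refine ⟨fun α => min (k : ℝ≥0∞) (g α), measurable_const.min hgm, fun α => ?_, ?_⟩
      · have := hgle α
        rw [← edist_dist] at this
        exact min_le_min le_rfl this
      · rw [← edist_dist] at hgi
        refine le_min ?_ ((lintegral_mono fun α => min_le_right _ _).trans hgi)
        calc _ ≤ ∫⁻ α, (k : ℝ≥0∞) ∂ψ := lintegral_mono fun α => min_le_left _ _
          _ = k := by simp
  choose J hJm hJle hJi using key
  have hEn : ∫⁻ p, C * edist p.1 p.2 ^ (-τ) ∂(μ.prod μ) ≠ ⊤ := by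
    rw [lintegral_const_mul _ hcont0.measurable, lintegral_prod _ hcont0.measurable.aemeasurable]
    exact ENNReal.mul_ne_top hCt henergy
  have hint : ∫⁻ α, Filter.liminf (fun k => J k α) Filter.atTop ∂ψ ≠ ⊤ := by
    refine ne_top_of_le_ne_top hEn ((lintegral_liminf_le hJm).trans ?_)
    refine Filter.liminf_le_of_le (by isBoundedDefault) fun b hb => ?_
    obtain ⟨k, hk⟩ := hb.exists
    exact hk.trans ((hJi k).trans (lintegral_mono fun p => min_le_right _ _))
  have hmain : ∀ᵐ α ∂ψ, ∫⁻ x, ∫⁻ y, edist (π α x) (π α y) ^ (-τ) ∂μ ∂μ < ⊤ := by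
    filter_upwards [ae_lt_top (Measurable.liminf hJm) hint] with α hα
    refine lt_of_le_of_lt ?_ hα
    rw [← lintegral_prod (fun p : EuclideanSpace ℝ (Fin n) × EuclideanSpace ℝ (Fin n) =>
      edist (π α p.1) (π α p.2) ^ (-τ)) (hcontD α).measurable.aemeasurable]
    calc _ = ∫⁻ p, Filter.liminf
          (fun k : ℕ => min (k : ℝ≥0∞) (edist (π α p.1) (π α p.2) ^ (-τ))) Filter.atTop
          ∂(μ.prod μ) := by
          refine lintegral_congr fun p => ?_
          refine (Filter.Tendsto.liminf_eq ?_).symm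
          have := (ENNReal.tendsto_nat_nhds_top).min
            (tendsto_const_nhds (x := edist (π α p.1) (π α p.2) ^ (-τ)))
          simpa using this
      _ ≤ _ := lintegral_liminf_le fun k => (continuous_const.min (hcontD α)).measurable
      _ ≤ _ := Filter.liminf_le_liminf (Filter.Eventually.of_forall fun k => hJle k α)
  refine ⟨?_, ?_⟩
  · filter_upwards [hmain] with α hα
    refine lt_of_le_of_lt ?_ hα
    unfold sEnergy
    refine (lintegral_map_le _ _).trans (lintegral_mono fun x => ?_)
    exact lintegral_map_le _ _
  · filter_upwards [hmain] with α hα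
    exact dim_bound μ (π α) (hcα α) τ hτ E hEae hα.ne
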